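/- arXiv:2404.16643 — 2 statements merged into one kernel-verified Lean document; each statement's English description precedes it below -/
import Mathlib

section
/- Let L be a finite lattice. For every c ∈ M̃_i(L) and c′ ∈ M̃_j(L), the boundary of the shuffle product satisfies ∂_{i+j+1}(c ⧢ c′) = ∂_i(c) ⧢ c′ + (−1)^{i+1} c ⧢ ∂_j(c′). -/
open Finsupp

noncomputable section

variable (K : Type) [Field K] (L : Type) [SemilatticeSup L]

/-- Order multichains with `n` entries (length `n - 1`) in the lattice `L`:
weakly decreasing tuples `(c₀ ≥ c₁ ≥ ⋯ ≥ c_{n-1})`. -/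
def MChain (n : ℕ) : Type := {c : Fin n → L // Antitone c}

/-- `∂ₖ^{(j)}`: deletion of the `k`-th entry of an order multichain. -/
def mdel {n : ℕ} (k : Fin (n + 1)) (c : MChain L (n + 1)) : MChain L n :=
  ⟨c.1 ∘ k.succAbove, c.2.comp_monotone (Fin.strictMono_succAbove k).monotone⟩

/-- Concatenation `c · c′` of tuples. -/
def concatT {a b n : ℕ} (h : a + b = n) (u : Fin a → L) (v : Fin b → L) : Fin n → L :=
  fun r => if hr : (r : ℕ) < a then u ⟨r, hr⟩ else v ⟨(r : ℕ) - a, by have := r.2; omega⟩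

/-- The operator `τ` sending a tuple `(a₀, …, a_{n-1})` to the multichain
`(a₀ ∨ ⋯ ∨ a_{n-1} ≥ a₁ ∨ ⋯ ∨ a_{n-1} ≥ ⋯ ≥ a_{n-1})` of suffix joins. -/
def tauMul {n : ℕ} (a : Fin n → L) : MChain L n :=
  ⟨fun r => (Finset.Ici r).sup' ⟨r, Finset.mem_Ici.mpr le_rfl⟩ a, by
    intro r r' hrr'
    apply Finset.sup'_le
    intro s hs
    exact Finset.le_sup' _ (Finset.mem_Ici.mpr (le_trans hrr' (Finset.mem_Ici.mp hs)))⟩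

/-- An `(i,j)`-shuffle, in block form: `IsShuffleBlocks t σ` says that the permutation `σ`
is monotone on the preimage of the values `{0, …, t-1}` (the first block) and on the
preimage of the remaining values (the second block).  An `(i,j)`-shuffle of
`{0, 1, …, i+j+1}` is exactly `IsShuffleBlocks (i+1)`. -/
def IsShuffleBlocks {n : ℕ} (t : ℕ) (σ : Equiv.Perm (Fin n)) : Prop :=
  (∀ p q : Fin n, p < q → (σ p : ℕ) < t → (σ q : ℕ) < t → σ p < σ q) ∧
  (∀ p q : Fin n, p < q → t ≤ (σ p : ℕ) → t ≤ (σ q : ℕ) → σ p < σ q)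

/-- The index `ℓ - 1` (with the convention `0 - 1 = 0`). -/
def prevIdx {n : ℕ} (ℓ : Fin n) : Fin n := ⟨(ℓ : ℕ) - 1, by have := ℓ.2; omega⟩

/-- The set `A₁^{i,j}` of pairs `(ℓ, σ)` with `σ` an `(i,j)`-shuffle, `ℓ ≥ 1`,
`σ(ℓ-1) ∈ {0,…,i}` and `σ(ℓ) ∈ {i+1,…,i+j+1}`. -/
def shuffleA1 (i j : ℕ) : Set (Fin (i + j + 2) × Equiv.Perm (Fin (i + j + 2))) :=
  {p | IsShuffleBlocks (i + 1) p.2 ∧ 1 ≤ (p.1 : ℕ) ∧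
       (p.2 (prevIdx p.1) : ℕ) ≤ i ∧ i + 1 ≤ (p.2 p.1 : ℕ)}

/-- The set `A₂^{i,j}` of pairs `(ℓ, σ)` with `σ` an `(i,j)`-shuffle, `ℓ ≥ 1`,
`σ(ℓ-1) ∈ {i+1,…,i+j+1}` and `σ(ℓ) ∈ {0,…,i}`. -/
def shuffleA2 (i j : ℕ) : Set (Fin (i + j + 2) × Equiv.Perm (Fin (i + j + 2))) :=
  {p | IsShuffleBlocks (i + 1) p.2 ∧ 1 ≤ (p.1 : ℕ) ∧
       i + 1 ≤ (p.2 (prevIdx p.1) : ℕ) ∧ (p.2 p.1 : ℕ) ≤ i}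

/-- The set `A₃^{i,j}` of pairs `(ℓ, σ)` with `σ` an `(i,j)`-shuffle and
`σ(ℓ-1), σ(ℓ) ∈ {0,…,i}`, the condition on `σ(ℓ-1)` being regarded as true for `ℓ = 0`. -/
def shuffleA3 (i j : ℕ) : Set (Fin (i + j + 2) × Equiv.Perm (Fin (i + j + 2))) :=
  {p | IsShuffleBlocks (i + 1) p.2 ∧
       (1 ≤ (p.1 : ℕ) → (p.2 (prevIdx p.1) : ℕ) ≤ i) ∧ (p.2 p.1 : ℕ) ≤ i}

/-- `M̃`: the `K`-vector space with basis the order multichains with `n` entries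
(length `n-1`).  In particular `MGrp K L 0 ≅ K` is `M̃₋₁`, spanned by the empty
multichain. -/
abbrev MGrp (n : ℕ) : Type := MChain L n →₀ K

/-- The simplicial boundary `∂ = Σ (-1)^j ∂^{(j)}` on multichains. -/
def mbdry (n : ℕ) : MGrp K L (n + 1) →ₗ[K] MGrp K L n :=
  Finsupp.lsum K fun c => ∑ k : Fin (n + 1), ((-1 : K) ^ (k : ℕ)) • Finsupp.lsingle (mdel L k c)

/-- Transport along an equality of lengths. -/
def castMGrp {a b : ℕ} (h : a = b) : MGrp K L a ≃ₗ[K] MGrp K L b :=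
  Finsupp.domLCongr (Equiv.cast (congrArg (MChain L) h))

open Classical in
/-- The shuffle product of two basis multichains, with `p` resp. `q` entries:
`c ⧢ c′ = Σ_{σ ∈ S_{p-1,q-1}} sgn(σ) · τ((c·c′)_σ)`. -/
def shufPair {p q : ℕ} (c : MChain L p) (c' : MChain L q) : MGrp K L (p + q) :=
  ∑ σ : Equiv.Perm (Fin (p + q)),
    if IsShuffleBlocks p σ then
      ((Equiv.Perm.sign σ : ℤ) : K) • Finsupp.single (tauMul L (concatT L rfl c.1 c'.1 ∘ ⇑σ)) 1
    else 0

/-- The shuffle product `⧢ : M̃_{p-1} ⊗ M̃_{q-1} → M̃_{p+q-1}` as a bilinear map. -/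
def shufLin (p q : ℕ) : MGrp K L p →ₗ[K] MGrp K L q →ₗ[K] MGrp K L (p + q) :=
  Finsupp.lsum K fun c =>
    LinearMap.toSpanSingleton K _
      (Finsupp.lsum K fun c' => LinearMap.toSpanSingleton K _ (shufPair K L c c'))

section TauMul

variable {L}

theorem tauMul_swap_le {n : ℕ} (ℓ : Fin n) (b : Fin n → L) {r : Fin n} (hr : r ≠ ℓ) :
    (tauMul L (b ∘ Equiv.swap (prevIdx ℓ) ℓ)).1 r ≤ (tauMul L b).1 r := by
  refine Finset.sup'_le Finset.nonempty_Ici _ fun s hs => Finset.le_sup' b ?_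
  rw [Finset.mem_Ici] at hs ⊢
  rw [Equiv.swap_apply_def]
  have hr' : (r : ℕ) ≠ ℓ := fun h => hr (Fin.ext h)
  split_ifs with h1 h2 <;> simp only [Fin.ext_iff, Fin.le_def, prevIdx] at * <;> omega

/-- Deleting the entry at `ℓ` of a multichain of suffix joins makes it insensitive to the order
of the entries at `ℓ - 1` and `ℓ`. -/
theorem mdel_tauMul_swap {n : ℕ} (ℓ : Fin (n + 1)) (b : Fin (n + 1) → L) :
    mdel L ℓ (tauMul L (b ∘ Equiv.swap (prevIdx ℓ) ℓ)) = mdel L ℓ (tauMul L b) := by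
  refine Subtype.ext (funext fun r => le_antisymm ?_ ?_)
  · exact tauMul_swap_le ℓ b (Fin.succAbove_ne ℓ r)
  · have h := tauMul_swap_le ℓ (b ∘ Equiv.swap (prevIdx ℓ) ℓ) (Fin.succAbove_ne ℓ r)
    rwa [Function.comp_assoc, ← Equiv.coe_trans, Equiv.swap_swap, Equiv.coe_refl,
      Function.comp_id] at h

/-- Deletion commutes with `τ` at an entry dominated by its predecessor. -/
theorem mdel_tauMul {n : ℕ} (ℓ : Fin (n + 1)) (b : Fin (n + 1) → L)
    (hb : 1 ≤ (ℓ : ℕ) → b ℓ ≤ b (prevIdx ℓ)) :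
    mdel L ℓ (tauMul L b) = tauMul L (b ∘ ℓ.succAbove) := by
  have key : ∀ (r : Fin n) (s : Fin (n + 1)), s ≠ ℓ → ℓ.succAbove r ≤ s →
      b s ≤ (tauMul L (b ∘ ℓ.succAbove)).1 r := by
    intro r s hs hrs
    obtain ⟨s, rfl⟩ := Fin.exists_succAbove_eq hs
    exact Finset.le_sup' (b ∘ ℓ.succAbove)
      (Finset.mem_Ici.mpr ((Fin.strictMono_succAbove ℓ).le_iff_le.mp hrs))
  refine Subtype.ext (funext fun r => le_antisymm ?_ ?_)
  · refine Finset.sup'_le Finset.nonempty_Ici _ fun s hs => ?_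
    rw [Finset.mem_Ici] at hs
    by_cases hsl : s = ℓ
    · subst hsl
      have hlt : s.succAbove r < s := lt_of_le_of_ne hs (Fin.succAbove_ne s r)
      rw [Fin.lt_def] at hlt
      refine (hb (by omega)).trans (key r _ ?_ ?_)
      · rw [Ne, Fin.ext_iff, prevIdx]; dsimp only; omega
      · rw [Fin.le_def, prevIdx]; dsimp only; omega
    · exact key r s hsl hs
  · refine Finset.sup'_le Finset.nonempty_Ici _ fun s hs => ?_
    exact Finset.le_sup' b (Finset.mem_Ici.mpr
      ((Fin.strictMono_succAbove ℓ).monotone (Finset.mem_Ici.mp hs)))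

end TauMul

section InsertDelete

variable {n : ℕ}

theorem succAbove_val (v : Fin (n + 1)) (x : Fin n) :
    ((v.succAbove x : Fin (n + 1)) : ℕ) = if (x : ℕ) < v then (x : ℕ) else x + 1 := by
  simp only [Fin.succAbove, Fin.lt_def, Fin.val_castSucc]
  split_ifs <;> simp

/-- The permutation sending `ℓ` to `v` and acting as `σ` between the complements. -/
def insPerm (ℓ v : Fin (n + 1)) (σ : Equiv.Perm (Fin n)) : Equiv.Perm (Fin (n + 1)) :=
  v.cycleRange⁻¹ * Equiv.Perm.decomposeFin.symm (0, σ) * ℓ.cycleRange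

/-- The permutation obtained from `σ` by removing position `ℓ` and its value. -/
def delPerm (ℓ : Fin (n + 1)) (σ : Equiv.Perm (Fin (n + 1))) : Equiv.Perm (Fin n) :=
  (Equiv.Perm.decomposeFin ((σ ℓ).cycleRange * σ * ℓ.cycleRange⁻¹)).2

theorem insPerm_self (ℓ v : Fin (n + 1)) (σ : Equiv.Perm (Fin n)) : insPerm ℓ v σ ℓ = v := by
  simp [insPerm, Equiv.Perm.inv_def]

theorem insPerm_succAbove (ℓ v : Fin (n + 1)) (σ : Equiv.Perm (Fin n)) (x : Fin n) :
    insPerm ℓ v σ (ℓ.succAbove x) = v.succAbove (σ x) := by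
  simp [insPerm, Equiv.Perm.inv_def]

theorem sign_insPerm (ℓ v : Fin (n + 1)) (σ : Equiv.Perm (Fin n)) :
    Equiv.Perm.sign (insPerm ℓ v σ) = (-1) ^ (v : ℕ) * Equiv.Perm.sign σ * (-1) ^ (ℓ : ℕ) := by
  simp [insPerm, Fin.sign_cycleRange]

theorem insPerm_delPerm (ℓ : Fin (n + 1)) (σ : Equiv.Perm (Fin (n + 1))) :
    insPerm ℓ (σ ℓ) (delPerm ℓ σ) = σ := by
  set τ := (σ ℓ).cycleRange * σ * ℓ.cycleRange⁻¹ with hτ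
  have h0 : (Equiv.Perm.decomposeFin τ).1 = 0 := by
    have h : τ 0 = 0 := by simp [hτ, Equiv.Perm.inv_def]
    rw [← h]
    conv_rhs => rw [← Equiv.Perm.decomposeFin.symm_apply_apply τ]
    rw [Equiv.Perm.decomposeFin_symm_apply_zero]
  have h1 : ((0 : Fin (n + 1)), delPerm ℓ σ) = Equiv.Perm.decomposeFin τ :=
    Prod.ext h0.symm rfl
  rw [insPerm, h1, Equiv.symm_apply_apply, hτ]
  group

theorem delPerm_insPerm (ℓ v : Fin (n + 1)) (σ : Equiv.Perm (Fin n)) :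
    delPerm ℓ (insPerm ℓ v σ) = σ := by
  rw [delPerm, insPerm_self, insPerm]
  have h : v.cycleRange * (v.cycleRange⁻¹ * Equiv.Perm.decomposeFin.symm (0, σ) * ℓ.cycleRange) *
      ℓ.cycleRange⁻¹ = Equiv.Perm.decomposeFin.symm (0, σ) := by group
  rw [h, Equiv.apply_symm_apply]

theorem succAbove_delPerm (ℓ : Fin (n + 1)) (σ : Equiv.Perm (Fin (n + 1))) (x : Fin n) :
    (σ ℓ).succAbove (delPerm ℓ σ x) = σ (ℓ.succAbove x) := by
  rw [← insPerm_succAbove ℓ, insPerm_delPerm]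

end InsertDelete

section Shuffles

variable {n : ℕ}

theorem isShuffleBlocks_iff {t : ℕ} {σ : Equiv.Perm (Fin n)} :
    IsShuffleBlocks t σ ↔
      ∀ p q : Fin n, p < q → ((σ p : ℕ) < t ↔ (σ q : ℕ) < t) → σ p < σ q := by
  constructor
  · rintro ⟨h1, h2⟩ p q hpq h
    by_cases hp : (σ p : ℕ) < t
    · exact h1 p q hpq hp (h.mp hp)
    · exact h2 p q hpq (not_lt.mp hp) (not_lt.mp fun hq => hp (h.mpr hq))
  · intro h
    exact ⟨fun p q hpq hp hq => h p q hpq (iff_of_true hp hq),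
      fun p q hpq hp hq => h p q hpq (iff_of_false (not_lt.mpr hp) (not_lt.mpr hq))⟩

/-- The size of the first block after removing the value `v`. -/
def blockDel (t v : ℕ) : ℕ := if v < t then t - 1 else t

theorem succAbove_lt_iff (t : ℕ) (v : Fin (n + 1)) (x : Fin n) :
    ((v.succAbove x : Fin (n + 1)) : ℕ) < t ↔ (x : ℕ) < blockDel t v := by
  rw [succAbove_val, blockDel]
  split_ifs <;> omega

/-- Position `ℓ` is initial, or the values at `ℓ - 1` and `ℓ` lie in the same block. -/
def SameBlock (t : ℕ) (ℓ : Fin n) (σ : Equiv.Perm (Fin n)) : Prop :=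
  1 ≤ (ℓ : ℕ) → ((σ (prevIdx ℓ) : ℕ) < t ↔ (σ ℓ : ℕ) < t)

theorem IsShuffleBlocks.delPerm {t : ℕ} {σ : Equiv.Perm (Fin (n + 1))}
    (h : IsShuffleBlocks t σ) (ℓ : Fin (n + 1)) :
    IsShuffleBlocks (blockDel t (σ ℓ)) (delPerm ℓ σ) := by
  rw [isShuffleBlocks_iff] at h ⊢
  intro p q hpq hb
  rw [← succAbove_lt_iff, ← succAbove_lt_iff, succAbove_delPerm, succAbove_delPerm] at hb
  have := h _ _ (Fin.strictMono_succAbove ℓ hpq) hb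
  rw [← succAbove_delPerm, ← succAbove_delPerm] at this
  exact (Fin.strictMono_succAbove _).lt_iff_lt.mp this

/-- The position at which the value `v` has to be inserted into the shuffle `σ`: directly after
the value `v - 1`, or at the front when `v` is the least value of its block. -/
def insPos (t : ℕ) (v : Fin (n + 1)) (σ : Equiv.Perm (Fin n)) : Fin (n + 1) :=
  if h : (v : ℕ) = 0 ∨ (v : ℕ) = t then 0
  else (σ.symm ⟨(v : ℕ) - 1, by have := v.2; omega⟩).succ

theorem insPos_cases (t : ℕ) (v : Fin (n + 1)) (σ : Equiv.Perm (Fin n)) :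
    (((v : ℕ) = 0 ∨ (v : ℕ) = t) ∧ insPos t v σ = 0) ∨
      ((v : ℕ) ≠ 0 ∧ (v : ℕ) ≠ t ∧ ∃ x, (σ x : ℕ) = v - 1 ∧ insPos t v σ = x.succ) := by
  by_cases h : (v : ℕ) = 0 ∨ (v : ℕ) = t
  · exact Or.inl ⟨h, by rw [insPos, dif_pos h]⟩
  · exact Or.inr ⟨fun h0 => h (Or.inl h0), fun h0 => h (Or.inr h0),
      σ.symm ⟨(v : ℕ) - 1, by have := v.2; omega⟩, by simp, by rw [insPos, dif_neg h]⟩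

theorem succAbove_eq_prevIdx (x : Fin n) : x.succ.succAbove x = prevIdx x.succ := by
  ext
  rw [succAbove_val]
  simp [prevIdx]

theorem sameBlock_insPerm (t : ℕ) (v : Fin (n + 1)) (σ : Equiv.Perm (Fin n)) :
    SameBlock t (insPos t v σ) (insPerm (insPos t v σ) v σ) := by
  intro hpos
  rw [insPerm_self]
  obtain ⟨-, h⟩ | ⟨h0, ht, x, hx, h⟩ := insPos_cases t v σ
  · simp [h] at hpos
  · rw [h, ← succAbove_eq_prevIdx, insPerm_succAbove, succAbove_val, hx]
    split_ifs <;> omega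

theorem IsShuffleBlocks.insPerm {t : ℕ} {v : Fin (n + 1)} {σ : Equiv.Perm (Fin n)}
    (hσ : IsShuffleBlocks (blockDel t v) σ) :
    IsShuffleBlocks t (insPerm (insPos t v σ) v σ) := by
  rw [isShuffleBlocks_iff] at hσ ⊢
  intro p q hpq hb
  set ℓ := insPos t v σ with hℓ
  by_cases hp : p = ℓ
  · have hq : q ≠ ℓ := fun hq => hpq.ne (hp.trans hq.symm)
    obtain ⟨q, rfl⟩ := Fin.exists_succAbove_eq hq
    subst hp
    rw [insPerm_self, insPerm_succAbove] at *
    obtain ⟨h, h'⟩ | ⟨h0, ht, x, hx, h⟩ := insPos_cases t v σ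
    · have hne : ((v.succAbove (σ q) : Fin (n + 1)) : ℕ) ≠ v :=
        fun e => Fin.succAbove_ne v (σ q) (Fin.ext e)
      rw [Fin.lt_def]
      omega
    · rw [← hℓ] at h
      rw [h, Fin.lt_def, succAbove_val] at hpq
      have hxq : x < q := by
        rw [Fin.lt_def]
        simp only [Fin.val_succ] at hpq
        split_ifs at hpq <;> omega
      rw [succAbove_lt_iff] at hb
      have := hσ x q hxq (by rw [← hb, hx, blockDel]; split_ifs <;> omega)
      rw [Fin.lt_def, hx] at this
      rw [Fin.lt_def, succAbove_val]
      split_ifs <;> omega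
  · obtain ⟨p, rfl⟩ := Fin.exists_succAbove_eq hp
    by_cases hq : q = ℓ
    · subst hq
      rw [insPerm_self, insPerm_succAbove] at *
      obtain ⟨h, h'⟩ | ⟨h0, ht, x, hx, h⟩ := insPos_cases t v σ
      · rw [← hℓ] at h'
        rw [h'] at hpq
        exact absurd hpq (Fin.not_lt_zero _)
      · rw [← hℓ] at h
        rw [h, Fin.lt_def, succAbove_val] at hpq
        have hpx : p ≤ x := by
          rw [Fin.le_def]
          simp only [Fin.val_succ] at hpq
          split_ifs at hpq <;> omega
        rw [succAbove_lt_iff] at hb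
        obtain rfl | hpx := hpx.eq_or_lt
        · rw [Fin.lt_def, succAbove_val]
          split_ifs <;> omega
        · have := hσ p x hpx (by rw [hb, hx, blockDel]; split_ifs <;> omega)
          rw [Fin.lt_def, hx] at this
          rw [Fin.lt_def, succAbove_val]
          split_ifs <;> omega
    · obtain ⟨q, rfl⟩ := Fin.exists_succAbove_eq hq
      rw [insPerm_succAbove, insPerm_succAbove, succAbove_lt_iff, succAbove_lt_iff] at hb
      rw [insPerm_succAbove, insPerm_succAbove]
      exact Fin.strictMono_succAbove v
        (hσ p q ((Fin.strictMono_succAbove ℓ).lt_iff_lt.mp hpq) hb)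

theorem insPos_delPerm {t : ℕ} {ℓ : Fin (n + 1)} {σ : Equiv.Perm (Fin (n + 1))}
    (hσ : IsShuffleBlocks t σ) (hb : SameBlock t ℓ σ) :
    insPos t (σ ℓ) (delPerm ℓ σ) = ℓ := by
  rw [isShuffleBlocks_iff] at hσ
  induction ℓ using Fin.cases with
  | zero =>
    obtain ⟨-, h⟩ | ⟨h0, ht, x, hx, h⟩ := insPos_cases t (σ 0) (delPerm 0 σ)
    · exact h
    · exfalso
      have hs := succAbove_delPerm 0 σ x
      have hv := succAbove_val (σ 0) (delPerm 0 σ x)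
      rw [hs, hx, if_pos (by omega)] at hv
      have := hσ 0 (Fin.succAbove 0 x) (by simp) (by omega)
      rw [Fin.lt_def] at this
      omega
  | succ y =>
    have hb' := hb (by simp)
    have hlt := hσ (prevIdx y.succ) y.succ (by simp [Fin.lt_def, prevIdx]) hb'
    rw [Fin.lt_def] at hlt
    obtain ⟨h, -⟩ | ⟨h0, ht, x, hx, h⟩ := insPos_cases t (σ y.succ) (delPerm y.succ σ)
    · omega
    · rw [h]
      congr 1
      have hs := succAbove_delPerm y.succ σ x
      have hv := succAbove_val (σ y.succ) (delPerm y.succ σ x)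
      rw [hs, hx, if_pos (by omega)] at hv
      have hy := succAbove_eq_prevIdx y
      rw [← hy] at hlt hb'
      rcases lt_trichotomy x y with hxy | hxy | hxy
      · have h1 := hσ _ _ (Fin.strictMono_succAbove y.succ hxy) (by omega)
        rw [Fin.lt_def] at h1
        omega
      · exact hxy
      · have h1 := hσ y.succ (y.succ.succAbove x) (by
          rw [Fin.lt_def, succAbove_val]
          rw [Fin.lt_def] at hxy
          simp only [Fin.val_succ]
          split_ifs <;> omega) (by omega)
        rw [Fin.lt_def] at h1
        omega

theorem IsShuffleBlocks.mul_swap {t : ℕ} {ℓ : Fin n} {σ : Equiv.Perm (Fin n)}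
    (hσ : IsShuffleBlocks t σ) (hb : ¬ SameBlock t ℓ σ) :
    IsShuffleBlocks t (σ * Equiv.swap (prevIdx ℓ) ℓ) := by
  rw [isShuffleBlocks_iff] at hσ ⊢
  intro p q hpq hpq'
  rw [Equiv.Perm.mul_apply, Equiv.Perm.mul_apply] at hpq' ⊢
  refine hσ _ _ ?_ hpq'
  rw [SameBlock, Classical.not_imp] at hb
  by_cases hex : p = prevIdx ℓ ∧ q = ℓ
  · obtain ⟨rfl, rfl⟩ := hex
    rw [Equiv.swap_apply_left, Equiv.swap_apply_right] at hpq'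
    exact absurd hpq'.symm hb.2
  · rw [Equiv.swap_apply_def, Equiv.swap_apply_def]
    have := hb.1
    split_ifs <;> simp only [Fin.ext_iff, Fin.lt_def, prevIdx] at * <;> omega

theorem not_sameBlock_mul_swap {t : ℕ} {ℓ : Fin n} {σ : Equiv.Perm (Fin n)}
    (hb : ¬ SameBlock t ℓ σ) : ¬ SameBlock t ℓ (σ * Equiv.swap (prevIdx ℓ) ℓ) := by
  rw [SameBlock, Classical.not_imp] at hb ⊢
  rw [Equiv.Perm.mul_apply, Equiv.Perm.mul_apply, Equiv.swap_apply_left, Equiv.swap_apply_right]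
  exact ⟨hb.1, fun h => hb.2 h.symm⟩

end Shuffles

section Boundary

theorem concatT_succAbove_left {X : Type} {p q n : ℕ} (h : p + 1 + q = n + 1) (h' : p + q = n)
    (u : Fin (p + 1) → X) (w : Fin q → X) (k : Fin (p + 1)) (v : Fin (n + 1))
    (hv : (v : ℕ) = k) :
    concatT X h u w ∘ v.succAbove = concatT X h' (u ∘ k.succAbove) w := by
  funext x
  have hk := k.2
  have hx := succAbove_val v x
  simp only [concatT, Function.comp_apply]
  split_ifs at hx ⊢
  all_goals first
    | omega
    | (congr 1; ext; simp only [succAbove_val]; split_ifs <;> omega)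

theorem concatT_succAbove_right {X : Type} {p q n : ℕ} (h : p + (q + 1) = n + 1) (h' : p + q = n)
    (u : Fin p → X) (w : Fin (q + 1) → X) (k : Fin (q + 1)) (v : Fin (n + 1))
    (hv : (v : ℕ) = p + k) :
    concatT X h u w ∘ v.succAbove = concatT X h' u (w ∘ k.succAbove) := by
  funext x
  have hx := succAbove_val v x
  simp only [concatT, Function.comp_apply]
  split_ifs at hx ⊢
  all_goals first
    | omega
    | (congr 1; ext; simp only [succAbove_val]; split_ifs <;> omega)

variable {L}

open Classical in
/-- The faces of a signed shuffle sum at positions between the two blocks cancel; the remaining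
ones are indexed by the deleted entry. -/
theorem sum_faces_eq {n : ℕ} (t : ℕ) (a : Fin (n + 1) → L)
    (ha : ∀ x y : Fin (n + 1), x < y → ((x : ℕ) < t ↔ (y : ℕ) < t) → a y ≤ a x) :
    (∑ ℓ : Fin (n + 1), ∑ σ : Equiv.Perm (Fin (n + 1)), if IsShuffleBlocks t σ then
      ((-1 : K) ^ (ℓ : ℕ) * ((Equiv.Perm.sign σ : ℤ) : K)) •
        Finsupp.single (mdel L ℓ (tauMul L (a ∘ σ))) (1 : K) else 0) =
    ∑ v : Fin (n + 1), ∑ σ : Equiv.Perm (Fin n), if IsShuffleBlocks (blockDel t v) σ then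
      ((-1 : K) ^ (v : ℕ) * ((Equiv.Perm.sign σ : ℤ) : K)) •
        Finsupp.single (tauMul L ((a ∘ v.succAbove) ∘ σ)) (1 : K) else 0 := by
  rw [← Fintype.sum_prod_type', ← Fintype.sum_prod_type', ← Finset.sum_filter,
    ← Finset.sum_filter, ← Finset.sum_filter_add_sum_filter_not _ (fun p => SameBlock t p.1 p.2)]
  have hcancel : (∑ p ∈ (Finset.univ.filter fun p : Fin (n + 1) × Equiv.Perm (Fin (n + 1)) =>
      IsShuffleBlocks t p.2).filter (fun p => ¬ SameBlock t p.1 p.2),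
      ((-1 : K) ^ (p.1 : ℕ) * ((Equiv.Perm.sign p.2 : ℤ) : K)) •
        Finsupp.single (mdel L p.1 (tauMul L (a ∘ p.2))) (1 : K)) = 0 := by
    have hne : ∀ p : Fin (n + 1) × Equiv.Perm (Fin (n + 1)), ¬ SameBlock t p.1 p.2 →
        prevIdx p.1 ≠ p.1 := by
      intro p hp h
      rw [SameBlock, h] at hp
      exact hp fun _ => Iff.rfl
    refine Finset.sum_involution (fun p _ => (p.1, p.2 * Equiv.swap (prevIdx p.1) p.1))
      ?_ ?_ ?_ ?_
    · intro p hp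
      have hp' := hne p (Finset.mem_filter.mp hp).2
      rw [Equiv.Perm.coe_mul, ← Function.comp_assoc, mdel_tauMul_swap, Equiv.Perm.sign_mul,
        Equiv.Perm.sign_swap hp', ← add_smul]
      simp
    · intro p hp _ h
      have hp' := hne p (Finset.mem_filter.mp hp).2
      exact hp' (Equiv.swap_eq_one_iff.mp (mul_eq_left.mp (congrArg Prod.snd h)))
    · intro p hp
      simp only [Finset.mem_filter, Finset.mem_univ, true_and] at hp ⊢
      exact ⟨hp.1.mul_swap hp.2, not_sameBlock_mul_swap hp.2⟩
    · intro p _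
      simp [mul_assoc]
  rw [hcancel, add_zero]
  refine Finset.sum_bij' (fun p _ => (p.2 p.1, delPerm p.1 p.2))
    (fun q _ => (insPos t q.1 q.2, insPerm (insPos t q.1 q.2) q.1 q.2)) ?_ ?_ ?_ ?_ ?_
  · intro p hp
    simp only [Finset.mem_filter, Finset.mem_univ, true_and] at hp ⊢
    exact hp.1.delPerm p.1
  · intro q hq
    simp only [Finset.mem_filter, Finset.mem_univ, true_and] at hq ⊢
    exact ⟨hq.insPerm, sameBlock_insPerm t q.1 q.2⟩
  · intro p hp
    simp only [Finset.mem_filter, Finset.mem_univ, true_and] at hp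
    simp only [insPos_delPerm hp.1 hp.2, insPerm_delPerm]
  · intro q _
    simp only [insPerm_self, delPerm_insPerm]
  · intro p hp
    simp only [Finset.mem_filter, Finset.mem_univ, true_and] at hp
    obtain ⟨ℓ, σ⟩ := p
    obtain ⟨hσ, hb⟩ := hp
    dsimp only at hσ hb ⊢
    rw [mdel_tauMul]
    · have hcomp : (a ∘ σ) ∘ ℓ.succAbove = (a ∘ (σ ℓ).succAbove) ∘ delPerm ℓ σ :=
        funext fun x => congrArg a (succAbove_delPerm ℓ σ x).symm
      rw [hcomp]
      congr 1
      conv_lhs => rw [← insPerm_delPerm ℓ σ, sign_insPerm]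
      push_cast
      have h1 : (-1 : K) ^ (ℓ : ℕ) * (-1) ^ (ℓ : ℕ) = 1 := by
        rw [← mul_pow]; simp
      linear_combination ((-1 : K) ^ (σ ℓ : ℕ) * ((Equiv.Perm.sign (delPerm ℓ σ) : ℤ) : K)) * h1
    · intro hpos
      refine ha _ _ (isShuffleBlocks_iff.mp hσ _ _ ?_ (hb hpos)) (hb hpos)
      rw [Fin.lt_def, prevIdx]
      dsimp only
      omega

theorem concatT_le_of_lt {p q n : ℕ} (h : p + q = n) (c : MChain L p) (c' : MChain L q)
    (x y : Fin n) (hxy : x < y) (hb : (x : ℕ) < p ↔ (y : ℕ) < p) :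
    concatT L h c.1 c'.1 y ≤ concatT L h c.1 c'.1 x := by
  rw [Fin.lt_def] at hxy
  unfold concatT
  split_ifs with hy hx hx
  · exact c.2 (Fin.mk_le_mk.mpr hxy.le)
  · exact absurd (hb.mpr hy) hx
  · exact absurd (hb.mp hx) hy
  · exact c'.2 (Fin.mk_le_mk.mpr (by omega))

open Classical in
theorem castMGrp_shufPair {p q n : ℕ} (h : p + q = n) (c : MChain L p) (c' : MChain L q) :
    castMGrp K L h (shufPair K L c c') = ∑ σ : Equiv.Perm (Fin n),
      if IsShuffleBlocks p σ then
        ((Equiv.Perm.sign σ : ℤ) : K) • Finsupp.single (tauMul L (concatT L h c.1 c'.1 ∘ σ)) 1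
      else 0 := by
  subst h
  have hid : castMGrp K L (rfl : p + q = p + q) = LinearEquiv.refl K _ := by
    ext x : 1
    simp [castMGrp]
  rw [hid]
  rfl

theorem mbdry_single (n : ℕ) (c : MChain L (n + 1)) :
    mbdry K L n (Finsupp.single c 1) =
      ∑ k : Fin (n + 1), (-1 : K) ^ (k : ℕ) • Finsupp.single (mdel L k c) 1 := by
  simp [mbdry]

theorem shufLin_single {p q : ℕ} (c : MChain L p) (c' : MChain L q) :
    shufLin K L p q (Finsupp.single c 1) (Finsupp.single c' 1) = shufPair K L c c' := by
  simp [shufLin]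

theorem mbdry_shufPair (i j : ℕ) (c : MChain L (i + 1)) (c' : MChain L (j + 1)) :
    mbdry K L (i + 1 + j) (shufPair K L (p := i + 1) (q := j + 1) c c') =
      castMGrp K L (show i + (j + 1) = i + 1 + j by omega)
          (shufLin K L i (j + 1) (mbdry K L i (Finsupp.single c 1)) (Finsupp.single c' 1)) +
        (-1 : K) ^ (i + 1) •
          shufLin K L (i + 1) j (Finsupp.single c 1) (mbdry K L j (Finsupp.single c' 1)) := by
  classical
  have hl : mbdry K L (i + 1 + j) (shufPair K L (p := i + 1) (q := j + 1) c c') =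
      ∑ ℓ : Fin (i + 1 + j + 1),
      ∑ σ : Equiv.Perm (Fin (i + 1 + j + 1)), if IsShuffleBlocks (i + 1) σ then
      ((-1 : K) ^ (ℓ : ℕ) * ((Equiv.Perm.sign σ : ℤ) : K)) •
        Finsupp.single (mdel L ℓ (tauMul L (concatT L rfl c.1 c'.1 ∘ σ))) (1 : K) else 0 := by
    rw [Finset.sum_comm, shufPair, map_sum]
    refine Finset.sum_congr rfl fun σ _ => ?_
    split_ifs
    · rw [map_smul, mbdry_single, Finset.smul_sum]
      exact Finset.sum_congr rfl fun k _ => by rw [smul_smul, mul_comm]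
    · simp
  rw [hl, sum_faces_eq K (i + 1) _ (concatT_le_of_lt _ c c'), mbdry_single, mbdry_single]
  simp only [map_sum, LinearMap.sum_apply, map_smul, LinearMap.smul_apply, shufLin_single]
  refine (Fin.sum_univ_add (a := i + 1) (b := j + 1) _).trans (congrArg₂ (· + ·) ?_ ?_)
  · refine Finset.sum_congr rfl fun k _ => ?_
    rw [castMGrp_shufPair, Finset.smul_sum]
    refine Finset.sum_congr rfl fun σ _ => ?_
    have hv : ((Fin.castAdd (j + 1) k : Fin (i + 1 + (j + 1))) : ℕ) = k := rfl
    have hblock : blockDel (i + 1) (Fin.castAdd (j + 1) k : Fin (i + 1 + (j + 1))) = i := by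
      rw [blockDel, hv, if_pos k.2, Nat.add_sub_cancel]
    rw [hblock, concatT_succAbove_left (n := i + 1 + j) rfl (by omega) c.1 c'.1 k _ hv, smul_ite,
      smul_zero, smul_smul]
    rfl
  · rw [Finset.smul_sum]
    refine Finset.sum_congr rfl fun k _ => ?_
    rw [shufPair, smul_smul, Finset.smul_sum]
    refine Finset.sum_congr rfl fun σ _ => ?_
    have hv : ((Fin.natAdd (i + 1) k : Fin (i + 1 + (j + 1))) : ℕ) = i + 1 + k := rfl
    have hblock : blockDel (i + 1) (Fin.natAdd (i + 1) k : Fin (i + 1 + (j + 1))) = i + 1 := by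
      rw [blockDel, hv, if_neg (by omega)]
    rw [hblock, concatT_succAbove_right (q := j) (n := i + 1 + j) rfl rfl c.1 c'.1 k _ hv, smul_ite,
      smul_zero, smul_smul, ← pow_add]
    rfl

theorem castMGrp_castMGrp {a b c : ℕ} (h : a = b) (h' : b = c) (x : MGrp K L a) :
    castMGrp K L h' (castMGrp K L h x) = castMGrp K L (h.trans h') x := by
  subst h h'
  simp [castMGrp]

end Boundary

/-- **boundary formula for the shuffle product.**  For every
`c ∈ M̃_i(L)` and `c′ ∈ M̃_j(L)` (encoded as elements of the spaces spanned by
multichains with `i+1` resp. `j+1` entries),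
`∂_{i+j+1}(c ⧢ c′) = ∂_i(c) ⧢ c′ + (-1)^{i+1} · (c ⧢ ∂_j(c′))`. -/
theorem shuffle_boundary_formula [Fintype L] (i j : ℕ)
    (c : MGrp K L (i + 1)) (c' : MGrp K L (j + 1)) :
    castMGrp K L (show (i + 1) + j = i + j + 1 by omega)
        (mbdry K L ((i + 1) + j) (shufLin K L (i + 1) (j + 1) c c')) =
      castMGrp K L (show i + (j + 1) = i + j + 1 by omega)
          (shufLin K L i (j + 1) (mbdry K L i c) c') +
        ((-1 : K) ^ (i + 1)) •
          castMGrp K L (show (i + 1) + j = i + j + 1 by omega)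
            (shufLin K L (i + 1) j c (mbdry K L j c')) := by
  have hbasis : ∀ (x : MChain L (i + 1)) (y : MChain L (j + 1)),
      castMGrp K L (show (i + 1) + j = i + j + 1 by omega)
        (mbdry K L ((i + 1) + j) (shufLin K L (i + 1) (j + 1) (single x 1) (single y 1))) =
      castMGrp K L (show i + (j + 1) = i + j + 1 by omega)
          (shufLin K L i (j + 1) (mbdry K L i (single x 1)) (single y 1)) +
        ((-1 : K) ^ (i + 1)) •
          castMGrp K L (show (i + 1) + j = i + j + 1 by omega)
            (shufLin K L (i + 1) j (single x 1) (mbdry K L j (single y 1))) := by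
    intro x y
    rw [shufLin_single, mbdry_shufPair, map_add, map_smul, castMGrp_castMGrp]
  induction c using Finsupp.induction_linear with
  | zero => simp
  | add f g hf hg =>
    simp only [map_add, LinearMap.add_apply, smul_add, hf, hg]
    abel
  | single x r =>
    induction c' using Finsupp.induction_linear with
    | zero => simp
    | add f g hf hg =>
      simp only [map_add, smul_add, hf, hg]
      abel
    | single y s =>
      rw [← mul_one r, ← mul_one s, ← smul_eq_mul r, ← smul_eq_mul s, ← Finsupp.smul_single,
        ← Finsupp.smul_single]
      simp only [map_smul, LinearMap.smul_apply, hbasis, smul_add]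
      simp only [smul_comm ((-1 : K) ^ (i + 1))]

end
end

section
/- Let P be a finite poset, J ⊆ P an order ideal, and (S_*(P), δ_*, φ) a synor complex for P. Then φ induces an isomorphism of relative homology H_*(S(P), S(P)^J) ≅ H̃_*(P, J), where H̃_*(P, J) is the relative reduced simplicial homology of the pair of order complexes. -/
open Finsupp

noncomputable section

variable (K : Type) [Field K]

section Core
variable (P : Type) [Preorder P]

/-- Order chains with `n` elements of the poset `P`, written as strictly
decreasing tuples `(x₀ > x₁ > ⋯ > x_{n-1})`. -/
def OChain (n : ℕ) : Type := {c : Fin n → P // StrictAnti c}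

/-- The chain group in "level" `n`: the `K`-vector space with basis the order chains with
`n` elements.  Level `n` corresponds to homological degree `n - 1`; in particular
`CGrp K P 0 ≅ K` is the reduced part `C̃₋₁`. -/
abbrev CGrp (n : ℕ) : Type := OChain P n →₀ K

/-- Deletion of the `k`-th entry of an order chain. -/
def odel {n : ℕ} (k : Fin (n + 1)) (c : OChain P (n + 1)) : OChain P n :=
  ⟨c.1 ∘ k.succAbove, c.2.comp_strictMono (Fin.strictMono_succAbove k)⟩

/-- The simplicial boundary map (of the reduced simplicial chain complex of the order
complex), from level `n+1` to level `n`. -/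
def cbdry (n : ℕ) : CGrp K P (n + 1) →ₗ[K] CGrp K P n :=
  Finsupp.lsum K fun c => ∑ k : Fin (n + 1), ((-1 : K) ^ (k : ℕ)) • Finsupp.lsingle (odel P k c)

/-- The cycles in level `n` (every level-0 chain, i.e. multiple of the empty chain,
is a cycle). -/
def cyclesAt : (n : ℕ) → Submodule K (CGrp K P n)
  | 0 => ⊤
  | (n + 1) => LinearMap.ker (cbdry K P n)

/-- The boundaries in level `n`. -/
def boundariesIn (n : ℕ) : Submodule K (CGrp K P n) :=
  LinearMap.range (cbdry K P n)

/-- `H̃_{n-1}(P) ≠ 0`: nontriviality of the reduced simplicial homology (with coefficients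
in `K`) of the order complex of `P` in degree `n - 1` (level `n`). -/
def RHomNontrivial (n : ℕ) : Prop := ¬ cyclesAt K P n ≤ boundariesIn K P n

/-- The subspace of chains all of whose elements lie in the subset `J ⊆ P`
(the chain group of the subposet `J`). -/
def chainsIn (J : Set P) (n : ℕ) : Submodule K (CGrp K P n) :=
  Finsupp.supported K K {c : OChain P n | ∀ r, c.1 r ∈ J}

/-- Transport of chain groups along an equality of levels. -/
def castCGrp {a b : ℕ} (h : a = b) : CGrp K P a ≃ₗ[K] CGrp K P b :=
  Finsupp.domLCongr (Equiv.cast (congrArg (OChain P) h))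

end Core


section Synor
variable (P : Type) [PartialOrder P]

/-- For a family `S` of graded pieces (with `S n x` the piece of homological degree `n`,
i.e. level `n+1`, sitting over `x ∈ P`) and a subset `J ⊆ P`, the part of the complex
lying over `J`: at level `0` it is all of `C̃₋₁ = K`, and at level `n+1` it is
`⊕_{x ∈ J} S_n^{(x)}`. -/
def idealPart (S : (n : ℕ) → P → Submodule K (CGrp K P (n + 1))) (J : Set P) :
    (nn : ℕ) → Submodule K (CGrp K P nn)
  | 0 => ⊤
  | (n + 1) => ⨆ x ∈ J, S n x

/-- A synor complex for the finite poset `P`: a strictly `P`-graded subcomplex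
`S_*(P) ⊆ C̃_*(P)` of the reduced simplicial chain complex of the order complex of `P`
(we identify the injective `P`-graded chain map `φ` with the inclusion of its image) with:
`S_i(P) = ⊕_{x ∈ P} S_i(P)^{(x)}` with `S_i(P)^{(x)}` contained in the span of the order
chains with largest element `x` (`graded`); `∂(S_i(P)^{(x)}) ⊆ ⊕_{y<x} S_{i-1}(P)^{(y)}`
(`strict`; for degree `0` the boundary lands in `C̃₋₁ = K` automatically); (S1)
`dim_K S_i(P)^{(x)} = dim_K H̃_{i-1}(P_{<x})` (`dim_eq`, the dimension of the reduced
homology being the dimension of the cycles minus the dimension of the boundaries); and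
(S2) for every order ideal `J ⊆ P` the inclusion `S_*(P)^J ⊆ C̃_*(J)` induces an
isomorphism on homology (`quasiIso`: surjectivity and injectivity of the induced map). -/
structure SynorComplex : Type where
  S : (n : ℕ) → P → Submodule K (CGrp K P (n + 1))
  graded : ∀ (n : ℕ) (x : P),
    S n x ≤ Finsupp.supported K K {c : OChain P (n + 1) | c.1 0 = x}
  strict : ∀ (n : ℕ) (x : P), ∀ f ∈ S (n + 1) x,
    cbdry K P (n + 1) f ∈ ⨆ y ∈ Set.Iio x, S n y
  dim_eq : ∀ (n : ℕ) (x : P),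
    Module.finrank K ↥(S n x) =
      Module.finrank K ↥(cyclesAt K {y : P // y < x} n) -
        Module.finrank K ↥(boundariesIn K {y : P // y < x} n)
  quasiIso : ∀ J : Set P, IsLowerSet J → ∀ nn : ℕ,
    (∀ z ∈ cyclesAt K P nn ⊓ chainsIn K P J nn,
        ∃ a ∈ cyclesAt K P nn ⊓ idealPart K P S J nn,
          z - a ∈ Submodule.map (cbdry K P nn) (chainsIn K P J (nn + 1))) ∧
    (∀ a ∈ idealPart K P S J nn,
        a ∈ Submodule.map (cbdry K P nn) (chainsIn K P J (nn + 1)) →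
        a ∈ Submodule.map (cbdry K P nn) (idealPart K P S J (nn + 1)))

end Synor

section Rel
variable (P : Type) [PartialOrder P]

/-- The relative cycles of the pair `(P, J)` at level `nn`: chains whose boundary is
supported in `J`.  (At level `0` every chain is a relative cycle, since the relative
complex has trivial part in level `-1`.) -/
def relCycles (J : Set P) : (nn : ℕ) → Submodule K (CGrp K P nn)
  | 0 => ⊤
  | (nn + 1) => Submodule.comap (cbdry K P nn) (chainsIn K P J nn)

/-- The relative boundaries of the pair `(P, J)` at level `nn`: sums of boundaries of
arbitrary chains and chains supported in `J`. -/
def relBoundaries (J : Set P) (nn : ℕ) : Submodule K (CGrp K P nn) :=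
  boundariesIn K P nn ⊔ chainsIn K P J nn

/-- The relative cycles of the pair `(S_*(P), S_*(P)^J)` at level `nn`. -/
def relCyclesS (σ : SynorComplex K P) (J : Set P) : (nn : ℕ) → Submodule K (CGrp K P nn)
  | 0 => ⊤
  | (nn + 1) => idealPart K P σ.S Set.univ (nn + 1) ⊓
      Submodule.comap (cbdry K P nn) (idealPart K P σ.S J nn)

/-- The relative boundaries of the pair `(S_*(P), S_*(P)^J)` at level `nn`. -/
def relBoundariesS (σ : SynorComplex K P) (J : Set P) (nn : ℕ) :
    Submodule K (CGrp K P nn) :=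
  Submodule.map (cbdry K P nn) (idealPart K P σ.S Set.univ (nn + 1)) ⊔ idealPart K P σ.S J nn

end Rel

section Auxiliary

/-- Deleting two entries of an order chain does not depend on the order of deletion. -/
lemma odel_odel_swap (P : Type) [Preorder P] {n : ℕ} (i : Fin (n + 2)) (j : Fin (n + 1))
    (c : OChain P (n + 2)) :
    odel P (j.predAbove i) (odel P (i.succAbove j) c) = odel P j (odel P i c) :=
  Subtype.ext <| funext fun k =>
    congrArg c.1 (Fin.succAbove_succAbove_succAbove_predAbove i j k)

lemma cbdry_single (P : Type) [Preorder P] (n : ℕ) (c : OChain P (n + 1)) (r : K) :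
    cbdry K P n (single c r) =
      ∑ k : Fin (n + 1), ((-1 : K) ^ (k : ℕ)) • single (odel P k c) r := by
  simp [cbdry]

lemma cbdry_cbdry (P : Type) [Preorder P] (n : ℕ) (f : CGrp K P (n + 2)) :
    cbdry K P n (cbdry K P (n + 1) f) = 0 := by
  induction f using Finsupp.induction_linear with
  | zero => simp
  | add f g hf hg => rw [map_add, map_add, hf, hg, add_zero]
  | single c r =>
    simp only [cbdry_single, map_sum, map_smul, Finset.smul_sum, smul_smul, ← pow_add]
    rw [← Finset.sum_product']
    refine Finset.sum_involution (fun p _ => (p.1.succAbove p.2, p.2.predAbove p.1))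
      ?_ ?_ (fun _ _ => Finset.mem_univ _) ?_
    · rintro ⟨i, j⟩ -
      simp only [odel_odel_swap, Fin.neg_one_pow_succAbove_add_predAbove, neg_smul,
        add_neg_cancel]
    · rintro ⟨i, j⟩ - - h
      exact Fin.succAbove_ne i j (congrArg Prod.fst h)
    · rintro ⟨i, j⟩ -
      simp only [Fin.succAbove_succAbove_predAbove, Fin.predAbove_predAbove_succAbove]

lemma cbdry_mem_cyclesAt (P : Type) [Preorder P] :
    ∀ (n : ℕ) (f : CGrp K P (n + 1)), cbdry K P n f ∈ cyclesAt K P n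
  | 0, _ => Submodule.mem_top
  | n + 1, f => cbdry_cbdry K P n f

lemma chainsIn_univ (P : Type) [Preorder P] (n : ℕ) : chainsIn K P Set.univ n = ⊤ := by
  simp [chainsIn, Finsupp.supported_univ]

lemma chainsIn_zero (P : Type) [Preorder P] (J : Set P) : chainsIn K P J 0 = ⊤ := by
  simp [chainsIn, Finsupp.supported_univ]

lemma idealPart_mono (P : Type) [PartialOrder P]
    (S : (n : ℕ) → P → Submodule K (CGrp K P (n + 1))) {I J : Set P} (h : I ⊆ J) :
    ∀ n, idealPart K P S I n ≤ idealPart K P S J n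
  | 0 => le_rfl
  | _ + 1 => biSup_mono h

/-- The part of a synor complex over an order ideal `J` consists of chains of `J`. -/
lemma SynorComplex.idealPart_le_chainsIn (P : Type) [PartialOrder P] (σ : SynorComplex K P)
    {J : Set P} (hJ : IsLowerSet J) :
    ∀ n, idealPart K P σ.S J n ≤ chainsIn K P J n
  | 0 => (chainsIn_zero K P J).ge
  | n + 1 => iSup₂_le fun x hx => (σ.graded n x).trans <|
      Finsupp.supported_mono fun c (hc : c.1 0 = x) r =>
        hJ (c.2.antitone (Fin.zero_le r)) (hc ▸ hx)

end Auxiliary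

/-- Let `P` be a finite poset, `J ⊆ P` an order ideal and
`(S_*(P), δ_*, φ)` a synor complex for `P` (identified with a subcomplex of `C̃_*(P)`).
Then `φ` (i.e. the inclusion) induces an isomorphism of relative homology
`H_*(S(P), S(P)^J) ≅ H̃_*(P, J)`: every relative cycle of `(C̃(P), C̃(J))` is, modulo
relative boundaries, a relative cycle of `(S(P), S(P)^J)` (surjectivity), and every
relative cycle of `(S(P), S(P)^J)` that is a relative boundary in `(C̃(P), C̃(J))` is a
relative boundary in `(S(P), S(P)^J)` (injectivity). -/
theorem synor_relative_homology_iso (P : Type) [PartialOrder P] [Fintype P]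
    (J : Set P) (hJ : IsLowerSet J) (σ : SynorComplex K P) (nn : ℕ) :
    (∀ z ∈ relCycles K P J nn,
        ∃ a ∈ relCyclesS K P σ J nn, z - a ∈ relBoundaries K P J nn) ∧
    (∀ a ∈ relCyclesS K P σ J nn,
        a ∈ relBoundaries K P J nn → a ∈ relBoundariesS K P σ J nn) := by
  have hU : IsLowerSet (Set.univ : Set P) := isLowerSet_univ
  cases nn with
  | zero =>
    refine ⟨fun z _ => ⟨0, Submodule.zero_mem _, ?_⟩, fun a _ _ => ?_⟩
    · exact Submodule.mem_sup_right (by simp [chainsIn_zero])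
    · exact Submodule.mem_sup_right Submodule.mem_top
  | succ n =>
    constructor
    · intro z hz
      obtain ⟨a, ⟨-, haS⟩, w, hw, hwa⟩ :=
        (σ.quasiIso J hJ n).1 (cbdry K P n z) ⟨cbdry_mem_cyclesAt K P n z, hz⟩
      obtain ⟨s, hs, hsa⟩ := (σ.quasiIso Set.univ hU n).2 a
        (idealPart_mono K P σ.S (Set.subset_univ J) n haS)
        ⟨z - w, by simp [chainsIn_univ], by rw [map_sub, hwa, sub_sub_cancel]⟩
      obtain ⟨b, ⟨hb, hbS⟩, v, -, hv⟩ := (σ.quasiIso Set.univ hU (n + 1)).1 (z - w - s)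
        ⟨by
          change cbdry K P n (z - w - s) = 0
          rw [map_sub, map_sub, hwa, hsa, sub_sub_cancel, sub_self],
        by simp [chainsIn_univ]⟩
      have hb : cbdry K P n b = 0 := hb
      refine ⟨s + b, ⟨add_mem hs hbS, ?_⟩, ?_⟩
      · change cbdry K P n (s + b) ∈ idealPart K P σ.S J n
        rwa [map_add, hsa, hb, add_zero]
      · have hsum : z - (s + b) = cbdry K P (n + 1) v + w := by rw [hv]; abel
        exact hsum ▸ Submodule.add_mem_sup ⟨v, rfl⟩ hw
    · rintro a ⟨haU, haJ⟩ ha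
      obtain ⟨_, ⟨c, rfl⟩, w, hw, rfl⟩ := Submodule.mem_sup.1 ha
      have hbd : cbdry K P n (cbdry K P (n + 1) c + w) = cbdry K P n w := by
        rw [map_add, cbdry_cbdry, zero_add]
      obtain ⟨s, hs, hsa⟩ := (σ.quasiIso J hJ n).2 _ haJ ⟨w, hw, hbd.symm⟩
      obtain ⟨b, ⟨-, hbS⟩, v, -, hv⟩ := (σ.quasiIso J hJ (n + 1)).1 (w - s)
        ⟨by
          change cbdry K P n (w - s) = 0
          rw [map_sub, hsa, hbd, sub_self],
        sub_mem hw (σ.idealPart_le_chainsIn K P hJ _ hs)⟩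
      have hsb : s + b ∈ idealPart K P σ.S J (n + 1) := add_mem hs hbS
      have hbdry := (σ.quasiIso Set.univ hU (n + 1)).2
        (cbdry K P (n + 1) c + w - (s + b))
        (sub_mem haU (idealPart_mono K P σ.S (Set.subset_univ J) _ hsb))
        ⟨c + v, by simp [chainsIn_univ], by rw [map_add, hv]; abel⟩
      exact sub_add_cancel (cbdry K P (n + 1) c + w) (s + b) ▸
        Submodule.add_mem_sup hbdry hsb

end
end
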